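/- Let d ≥ 1, R > 0, q' > 0, let γ̃ ∈ ℝᵈ, let σ = (σ_{jk}) be a symmetric positive semidefinite d×d real matrix, let ψ : ℝ → ℝ be an arbitrary function, and let h̃₁, h̃₂ : ℝᵈ → ℝ be bounded on B_R(0). Suppose u₁, u₂ : ℝᵈ → ℝ are continuous on the closed ball B̄_R(0), twice continuously differentiable on the open ball B_R(0), vanish on the sphere {x : |x| = R}, and satisfy, for i = 1, 2 and every x ∈ B_R(0): q'·u_i(x) − (1/2)·∑_{j,k} σ_{jk} ∂²_{jk}u_i(x) − ⟨∇u_i(x), γ̃⟩ + ψ(|∇u_i(x)|²) = h̃_i(x). Then sup_{x ∈ B̄_R(0)} |u₁(x) − u₂(x)| ≤ (1/q')·sup_{x ∈ B_R(0)} |h̃₁(x) − h̃₂(x)|. -/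

import Mathlib

open Metric
open scoped RealInnerProductSpace

/-!
This is the maximum principle for degenerate elliptic equations. At an interior maximum of
`u₁ - u₂` the gradients agree, so the terms depending on the gradient alone cancel, however
irregular `ψ` is; the Hessians are ordered there, so the second-order terms have a favourable sign.
What remains of the difference of the two equations at that point is
`q' (u₁ - u₂) ≤ h₁ - h₂`.
-/

open Filter Set Topology

section SecondOrder

variable {𝕜 E F : Type*} [NontriviallyNormedField 𝕜] [NormedAddCommGroup E] [NormedSpace 𝕜 E]
  [NormedAddCommGroup F] [NormedSpace 𝕜 F] {f : E → F} {x : E}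

theorem eventually_differentiableAt_of_contDiffAt_two (hf : ContDiffAt 𝕜 2 f x) :
    ∀ᶠ y in 𝓝 x, DifferentiableAt 𝕜 f y :=
  (hf.eventually (by simp)).mono fun _ hy => hy.differentiableAt two_ne_zero

theorem differentiableAt_fderiv_of_contDiffAt_two (hf : ContDiffAt 𝕜 2 f x) :
    DifferentiableAt 𝕜 (fderiv 𝕜 f) x :=
  (hf.fderiv_right (m := 1) one_add_one_eq_two.le).differentiableAt one_ne_zero

theorem fderiv_fderiv_apply_const (hf : ContDiffAt 𝕜 2 f x) (v w : E) :
    fderiv 𝕜 (fun y => fderiv 𝕜 f y v) x w = fderiv 𝕜 (fderiv 𝕜 f) x w v := by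
  rw [fderiv_clm_apply (differentiableAt_fderiv_of_contDiffAt_two hf) (differentiableAt_const v)]
  simp

theorem fderiv_fderiv_sub {g : E → F} (hf : ContDiffAt 𝕜 2 f x) (hg : ContDiffAt 𝕜 2 g x) :
    fderiv 𝕜 (fderiv 𝕜 (f - g)) x = fderiv 𝕜 (fderiv 𝕜 f) x - fderiv 𝕜 (fderiv 𝕜 g) x := by
  have hfirst : fderiv 𝕜 (f - g) =ᶠ[𝓝 x] fderiv 𝕜 f - fderiv 𝕜 g := by
    filter_upwards [eventually_differentiableAt_of_contDiffAt_two hf,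
      eventually_differentiableAt_of_contDiffAt_two hg] with y hfy hgy
    exact fderiv_sub hfy hgy
  rw [hfirst.fderiv_eq, fderiv_sub (differentiableAt_fderiv_of_contDiffAt_two hf)
    (differentiableAt_fderiv_of_contDiffAt_two hg)]

theorem deriv_deriv_comp_add_smul (hf : ContDiffAt 𝕜 2 f x) (v : E) :
    deriv (deriv fun t : 𝕜 => f (x + t • v)) 0 = fderiv 𝕜 (fderiv 𝕜 f) x v v := by
  have hline (t : 𝕜) : HasDerivAt (fun t : 𝕜 => x + t • v) v t := by
    simpa using ((hasDerivAt_id t).smul_const v).const_add x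
  have htendsto : Tendsto (fun t : 𝕜 => x + t • v) (𝓝 0) (𝓝 x) := by
    simpa using (hline 0).continuousAt.tendsto
  have hfirst : deriv (fun t : 𝕜 => f (x + t • v)) =ᶠ[𝓝 0] fun t => fderiv 𝕜 f (x + t • v) v := by
    filter_upwards [htendsto.eventually (eventually_differentiableAt_of_contDiffAt_two hf)]
      with t ht
    exact (ht.hasFDerivAt.comp_hasDerivAt t (hline t)).deriv
  have hsecond : HasFDerivAt (fun y => fderiv 𝕜 f y v) ((fderiv 𝕜 (fderiv 𝕜 f) x).flip v)
      (x + (0 : 𝕜) • v) := by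
    simpa using (differentiableAt_fderiv_of_contDiffAt_two hf).hasFDerivAt.clm_apply
      (hasFDerivAt_const v x)
  rw [hfirst.deriv_eq]
  exact (hsecond.comp_hasDerivAt (0 : 𝕜) (hline 0)).deriv

end SecondOrder

section LocalMax

theorem deriv_deriv_nonpos_of_isLocalMax {f : ℝ → ℝ} {a : ℝ} (hmax : IsLocalMax f a)
    (hf : ContinuousAt f a) : deriv (deriv f) a ≤ 0 := by
  by_contra! hpos
  -- The second derivative test makes `a` a local minimum too, so `f` is constant near `a`.
  have hmin : IsLocalMin f a := isLocalMin_of_deriv_deriv_pos hpos hmax.deriv_eq_zero hf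
  have hconst : f =ᶠ[𝓝 a] fun _ => f a := by
    filter_upwards [hmin, hmax] with t hle hge using le_antisymm hge hle
  have hzero : deriv (deriv f) a = 0 := by
    rw [hconst.deriv.deriv_eq]
    simp
  exact hpos.ne' hzero

variable {E : Type*} [NormedAddCommGroup E] [NormedSpace ℝ E] {f u v : E → ℝ} {x : E}

theorem fderiv_fderiv_apply_self_nonpos_of_isLocalMax (hmax : IsLocalMax f x)
    (hf : ContDiffAt ℝ 2 f x) (w : E) : fderiv ℝ (fderiv ℝ f) x w w ≤ 0 := by
  have hline : ContinuousAt (fun t : ℝ => x + t • w) 0 := by fun_prop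
  have hx : x + (0 : ℝ) • w = x := by simp
  rw [← deriv_deriv_comp_add_smul hf]
  refine deriv_deriv_nonpos_of_isLocalMax ?_ (hf.continuousAt.comp_of_eq hline hx)
  rw [← hx] at hmax
  exact IsMaxFilter.comp_tendsto hmax hline.tendsto

theorem fderiv_eq_of_isLocalMax_sub (hmax : IsLocalMax (u - v) x) (hu : DifferentiableAt ℝ u x)
    (hv : DifferentiableAt ℝ v x) : fderiv ℝ u x = fderiv ℝ v x := by
  rw [← sub_eq_zero, ← fderiv_sub hu hv, hmax.fderiv_eq_zero]

theorem fderiv_fderiv_apply_self_le_of_isLocalMax_sub (hmax : IsLocalMax (u - v) x)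
    (hu : ContDiffAt ℝ 2 u x) (hv : ContDiffAt ℝ 2 v x) (w : E) :
    fderiv ℝ (fderiv ℝ u) x w w ≤ fderiv ℝ (fderiv ℝ v) x w w := by
  have hnonpos := fderiv_fderiv_apply_self_nonpos_of_isLocalMax hmax (hu.sub hv) w
  rw [fderiv_fderiv_sub hu hv] at hnonpos
  exact sub_nonpos.mp hnonpos

end LocalMax

theorem bddAbove_image_abs_sub {α : Type*} {s : Set α} {f g : α → ℝ}
    (hf : ∃ M, ∀ x ∈ s, |f x| ≤ M) (hg : ∃ M, ∀ x ∈ s, |g x| ≤ M) :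
    BddAbove ((fun x => |f x - g x|) '' s) := by
  obtain ⟨M, hM⟩ := hf
  obtain ⟨N, hN⟩ := hg
  exact ⟨M + N, forall_mem_image.mpr fun x hx =>
    (abs_sub _ _).trans (add_le_add (hM x hx) (hN x hx))⟩

section Comparison

variable {E : Type*} [NormedAddCommGroup E] [NormedSpace ℝ E]

/-- A function `G` of a gradient `p` and a Hessian `A` is degenerate elliptic if it is antitone in
`A` for the Loewner order. Gradients are encoded as functionals and Hessians as bilinear forms, so
that `G (fderiv ℝ u x) (fderiv ℝ (fderiv ℝ u) x)` is the operator `G(Du, D²u)` at `x`. -/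
def IsDegenerateElliptic (G : (E →L[ℝ] ℝ) → (E →L[ℝ] E →L[ℝ] ℝ) → ℝ) : Prop :=
  ∀ p A B, (∀ w, A w w ≤ B w w) → G p B ≤ G p A

theorem IsDegenerateElliptic.le_of_isLocalMax_sub
    {G : (E →L[ℝ] ℝ) → (E →L[ℝ] E →L[ℝ] ℝ) → ℝ} (hG : IsDegenerateElliptic G) {u v : E → ℝ}
    {x : E} (hmax : IsLocalMax (u - v) x) (hu : ContDiffAt ℝ 2 u x) (hv : ContDiffAt ℝ 2 v x) :
    G (fderiv ℝ v x) (fderiv ℝ (fderiv ℝ v) x) ≤ G (fderiv ℝ u x) (fderiv ℝ (fderiv ℝ u) x) := by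
  rw [fderiv_eq_of_isLocalMax_sub hmax (hu.differentiableAt two_ne_zero)
    (hv.differentiableAt two_ne_zero)]
  exact hG _ _ _ (fderiv_fderiv_apply_self_le_of_isLocalMax_sub hmax hu hv)

variable {Ω : Set E} {q : ℝ} {G : E → (E →L[ℝ] ℝ) → (E →L[ℝ] E →L[ℝ] ℝ) → ℝ}

theorem sub_le_div_of_isDegenerateElliptic (hΩ : IsOpen Ω) (hΩc : IsCompact (closure Ω))
    (hq : 0 < q) (hG : ∀ x ∈ Ω, IsDegenerateElliptic (G x)) {S : ℝ} (hS : 0 ≤ S) {u v : E → ℝ}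
    (huc : ContinuousOn u (closure Ω)) (hvc : ContinuousOn v (closure Ω))
    (hud : ContDiffOn ℝ 2 u Ω) (hvd : ContDiffOn ℝ 2 v Ω) (hbd : ∀ x ∈ frontier Ω, u x ≤ v x)
    (heq : ∀ x ∈ Ω, (q * u x + G x (fderiv ℝ u x) (fderiv ℝ (fderiv ℝ u) x))
      - (q * v x + G x (fderiv ℝ v x) (fderiv ℝ (fderiv ℝ v) x)) ≤ S) :
    ∀ x ∈ closure Ω, u x - v x ≤ S / q := by
  intro x hx
  obtain ⟨z, hz, hmax⟩ := hΩc.exists_isMaxOn ⟨x, hx⟩ (huc.sub hvc)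
  refine (hmax hx).trans (show u z - v z ≤ S / q from ?_)
  by_cases hzΩ : z ∈ Ω
  · have hnhds : Ω ∈ 𝓝 z := hΩ.mem_nhds hzΩ
    have hlocal : IsLocalMax (u - v) z := hmax.isLocalMax (mem_of_superset hnhds subset_closure)
    have hoperator := (hG z hzΩ).le_of_isLocalMax_sub hlocal (hud.contDiffAt hnhds)
      (hvd.contDiffAt hnhds)
    rw [le_div_iff₀' hq]
    linarith [heq z hzΩ]
  · have hfrontier : z ∈ frontier Ω := ⟨hz, by rwa [hΩ.interior_eq]⟩
    exact (sub_nonpos.mpr (hbd z hfrontier)).trans (by positivity)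

theorem stability_penalized_dirichlet_general (hΩ : IsOpen Ω) (hΩc : IsCompact (closure Ω))
    (hq : 0 < q) (hG : ∀ x ∈ Ω, IsDegenerateElliptic (G x)) {h₁ h₂ u₁ u₂ : E → ℝ}
    (hb : BddAbove ((fun x => |h₁ x - h₂ x|) '' Ω))
    (hu₁c : ContinuousOn u₁ (closure Ω)) (hu₂c : ContinuousOn u₂ (closure Ω))
    (hu₁d : ContDiffOn ℝ 2 u₁ Ω) (hu₂d : ContDiffOn ℝ 2 u₂ Ω)
    (hbd : ∀ x ∈ frontier Ω, u₁ x = u₂ x)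
    (heq₁ : ∀ x ∈ Ω, q * u₁ x + G x (fderiv ℝ u₁ x) (fderiv ℝ (fderiv ℝ u₁) x) = h₁ x)
    (heq₂ : ∀ x ∈ Ω, q * u₂ x + G x (fderiv ℝ u₂ x) (fderiv ℝ (fderiv ℝ u₂) x) = h₂ x) :
    sSup ((fun x => |u₁ x - u₂ x|) '' closure Ω) ≤
      (1 / q) * sSup ((fun x => |h₁ x - h₂ x|) '' Ω) := by
  set S := sSup ((fun x => |h₁ x - h₂ x|) '' Ω)
  have hS : 0 ≤ S := Real.sSup_nonneg (forall_mem_image.mpr fun _ _ => abs_nonneg _)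
  have hle : ∀ x ∈ Ω, |h₁ x - h₂ x| ≤ S := fun x hx => le_csSup hb (mem_image_of_mem _ hx)
  rw [one_div_mul_eq_div]
  refine Real.sSup_le (forall_mem_image.mpr fun x hx => abs_sub_le_iff.mpr ⟨?_, ?_⟩)
    (by positivity)
  · refine sub_le_div_of_isDegenerateElliptic hΩ hΩc hq hG hS hu₁c hu₂c hu₁d hu₂d
      (fun y hy => (hbd y hy).le) (fun y hy => ?_) x hx
    rw [heq₁ y hy, heq₂ y hy]
    exact (abs_sub_le_iff.mp (hle y hy)).1
  · refine sub_le_div_of_isDegenerateElliptic hΩ hΩc hq hG hS hu₂c hu₁c hu₂d hu₁d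
      (fun y hy => (hbd y hy).ge) (fun y hy => ?_) x hx
    rw [heq₁ y hy, heq₂ y hy]
    exact (abs_sub_le_iff.mp (hle y hy)).2

end Comparison

section PenalizedOperator

variable {ι : Type*} [Fintype ι]

theorem sum_mul_bilin_nonneg_of_posSemidef {M : Type*} [AddCommGroup M] [Module ℝ M]
    {σ : Matrix ι ι ℝ} (hσ : σ.PosSemidef) {B : M →ₗ[ℝ] M →ₗ[ℝ] ℝ} (hB : ∀ w, 0 ≤ B w w)
    (e : ι → M) : 0 ≤ ∑ j, ∑ k, σ j k * B (e j) (e k) := by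
  obtain ⟨m, a, rfl⟩ := Matrix.posSemidef_iff_eq_sum_vecMulVec.mp hσ
  have hsquare (c : ι → ℝ) : ∑ j, ∑ k, Matrix.vecMulVec c (star c) j k * B (e j) (e k) =
      B (∑ j, c j • e j) (∑ k, c k • e k) := by
    rw [Finset.sum_comm]
    simp only [Matrix.vecMulVec_apply, star_trivial, map_sum, map_smul, LinearMap.sum_apply,
      LinearMap.smul_apply, smul_eq_mul, Finset.mul_sum]
    exact Finset.sum_congr rfl fun k _ => Finset.sum_congr rfl fun j _ => by ring
  simp only [Matrix.sum_apply, Finset.sum_mul]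
  rw [Finset.sum_comm_cycle]
  simp only [hsquare]
  exact Finset.sum_nonneg fun i _ => hB _

variable [DecidableEq ι] (γ : EuclideanSpace ℝ ι) (σ : Matrix ι ι ℝ) (ψ : ℝ → ℝ)

/-- The differential operator `-½ tr(σ A) - ⟪p, γ⟫ + ψ(|p|²)` of the penalized Dirichlet problem,
without its zeroth-order term, as a function of the gradient `p` and the Hessian `A`; the Riesz
isomorphism turns the functional `p` into the gradient vector. -/
noncomputable def penalizedOperator (p : EuclideanSpace ℝ ι →L[ℝ] ℝ)
    (A : EuclideanSpace ℝ ι →L[ℝ] EuclideanSpace ℝ ι →L[ℝ] ℝ) : ℝ :=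
  -(1 / 2) * ∑ j, ∑ k, σ j k * A (EuclideanSpace.single j 1) (EuclideanSpace.single k 1)
    - ⟪(InnerProductSpace.toDual ℝ _).symm p, γ⟫
    + ψ (‖(InnerProductSpace.toDual ℝ _).symm p‖ ^ 2)

variable {σ} in
theorem isDegenerateElliptic_penalizedOperator (hσ : σ.PosSemidef) :
    IsDegenerateElliptic (penalizedOperator γ σ ψ) := by
  intro p A B hAB
  have hnonneg := sum_mul_bilin_nonneg_of_posSemidef hσ (B := (B - A).toLinearMap₁₂)
    (fun w => sub_nonneg.mpr (hAB w)) fun j => EuclideanSpace.single j 1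
  have hsum : ∑ j, ∑ k, σ j k * A (EuclideanSpace.single j 1) (EuclideanSpace.single k 1) ≤
      ∑ j, ∑ k, σ j k * B (EuclideanSpace.single j 1) (EuclideanSpace.single k 1) := by
    simpa [mul_sub, Finset.sum_sub_distrib] using hnonneg
  unfold penalizedOperator
  linarith

theorem add_penalizedOperator_eq {u : EuclideanSpace ℝ ι → ℝ} {x : EuclideanSpace ℝ ι}
    (hu : ContDiffAt ℝ 2 u x) (c : ℝ) :
    c + penalizedOperator γ σ ψ (fderiv ℝ u x) (fderiv ℝ (fderiv ℝ u) x) =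
      c - (1 / 2) * ∑ j, ∑ k, σ j k *
            fderiv ℝ (fun y => fderiv ℝ u y (EuclideanSpace.single k 1)) x
              (EuclideanSpace.single j 1)
        - ⟪gradient u x, γ⟫ + ψ (‖gradient u x‖ ^ 2) := by
  simp only [penalizedOperator, gradient, fderiv_fderiv_apply_const hu]
  ring

end PenalizedOperator

/-- Sup-norm stability estimate for the penalized non-linear Dirichlet problem: if `u₁, u₂`
solve the problem with data `h̃₁, h̃₂`, then
`sup_{B̄_R(0)} |u₁ − u₂| ≤ (1/q') sup_{B_R(0)} |h̃₁ − h̃₂|`. -/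
theorem stability_penalized_dirichlet
    (d : ℕ) (hd : 1 ≤ d) (R : ℝ) (hR : 0 < R) (q' : ℝ) (hq' : 0 < q')
    (γ : EuclideanSpace ℝ (Fin d)) (σ : Matrix (Fin d) (Fin d) ℝ)
    (hσ : σ.PosSemidef)
    (ψ : ℝ → ℝ) (h₁ h₂ : EuclideanSpace ℝ (Fin d) → ℝ)
    (hb₁ : ∃ M, ∀ x ∈ ball (0 : EuclideanSpace ℝ (Fin d)) R, |h₁ x| ≤ M)
    (hb₂ : ∃ M, ∀ x ∈ ball (0 : EuclideanSpace ℝ (Fin d)) R, |h₂ x| ≤ M)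
    (u₁ u₂ : EuclideanSpace ℝ (Fin d) → ℝ)
    (hu₁c : ContinuousOn u₁ (closedBall 0 R))
    (hu₂c : ContinuousOn u₂ (closedBall 0 R))
    (hu₁d : ContDiffOn ℝ 2 u₁ (ball 0 R))
    (hu₂d : ContDiffOn ℝ 2 u₂ (ball 0 R))
    (hu₁b : ∀ x : EuclideanSpace ℝ (Fin d), ‖x‖ = R → u₁ x = 0)
    (hu₂b : ∀ x : EuclideanSpace ℝ (Fin d), ‖x‖ = R → u₂ x = 0)
    (heq₁ : ∀ x ∈ ball (0 : EuclideanSpace ℝ (Fin d)) R,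
      q' * u₁ x
        - (1 / 2) * ∑ j, ∑ k, σ j k *
            fderiv ℝ (fun y => fderiv ℝ u₁ y (EuclideanSpace.single k 1)) x
              (EuclideanSpace.single j 1)
        - ⟪gradient u₁ x, γ⟫ + ψ (‖gradient u₁ x‖ ^ 2) = h₁ x)
    (heq₂ : ∀ x ∈ ball (0 : EuclideanSpace ℝ (Fin d)) R,
      q' * u₂ x
        - (1 / 2) * ∑ j, ∑ k, σ j k *
            fderiv ℝ (fun y => fderiv ℝ u₂ y (EuclideanSpace.single k 1)) x
              (EuclideanSpace.single j 1)
        - ⟪gradient u₂ x, γ⟫ + ψ (‖gradient u₂ x‖ ^ 2) = h₂ x) :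
    sSup ((fun x => |u₁ x - u₂ x|) '' closedBall (0 : EuclideanSpace ℝ (Fin d)) R) ≤
      (1 / q') * sSup ((fun x => |h₁ x - h₂ x|) '' ball (0 : EuclideanSpace ℝ (Fin d)) R) := by
  have hfrontier : ∀ x ∈ frontier (ball (0 : EuclideanSpace ℝ (Fin d)) R), u₁ x = u₂ x := by
    intro x hx
    rw [frontier_ball 0 hR.ne', mem_sphere_zero_iff_norm] at hx
    rw [hu₁b x hx, hu₂b x hx]
  rw [← closure_ball 0 hR.ne'] at hu₁c hu₂c ⊢
  exact stability_penalized_dirichlet_general isOpen_ball isBounded_ball.isCompact_closure hq'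
    (fun _ _ => isDegenerateElliptic_penalizedOperator γ ψ hσ) (bddAbove_image_abs_sub hb₁ hb₂)
    hu₁c hu₂c hu₁d hu₂d hfrontier
    (fun x hx => (add_penalizedOperator_eq γ σ ψ
      (hu₁d.contDiffAt (isOpen_ball.mem_nhds hx)) (q' * u₁ x)).trans (heq₁ x hx))
    (fun x hx => (add_penalizedOperator_eq γ σ ψ
      (hu₂d.contDiffAt (isOpen_ball.mem_nhds hx)) (q' * u₂ x)).trans (heq₂ x hx))
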